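/- Let S be a set of 2k points in the plane in general position such that exactly one point Q of S lies in the interior of the convex hull of S, and suppose that it is NOT the case that for every point P ∈ S \ {Q} the line through Q and P halves S (i.e., there exists P ∈ S \ {Q} such that the two open half-planes bounded by the line through Q and P contain unequal numbers of points of S). Then there exists a point P₀ ∈ S \ {Q} such that the two open half-planes bounded by the line through Q and P₀ contain exactly k − 2 and k points of S, respectively. -/

import Mathlib

open scoped Classical

/-- Points in the plane. -/
abbrev Pt : Type := ℝ × ℝ

/-- A finite planar point set is in *general position* if no three of its
points are collinear. -/
def GeneralPosition (S : Finset Pt) : Prop :=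
  ∀ p ∈ S, ∀ q ∈ S, ∀ r ∈ S, p ≠ q → p ≠ r → q ≠ r →
    ¬ Collinear ℝ ({p, q, r} : Set Pt)

/-- The closed straight-line segment spanned by an unordered pair of points. -/
noncomputable def seg : Sym2 Pt → Set Pt :=
  Sym2.lift ⟨fun a b => segment ℝ a b, fun a b => segment_symm ℝ a b⟩

/-- `M` is a non-crossing perfect matching of `S`: a partition of `S` into
unordered pairs (of distinct points) whose closed segments are pairwise disjoint. -/
def IsNCMatching (S : Finset Pt) (M : Finset (Sym2 Pt)) : Prop :=
  (∀ e ∈ M, ¬ e.IsDiag) ∧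
  (∀ e ∈ M, ∀ p, p ∈ e → p ∈ S) ∧
  (∀ p ∈ S, ∃! e, e ∈ M ∧ p ∈ e) ∧
  (∀ e ∈ M, ∀ f ∈ M, e ≠ f → Disjoint (seg e) (seg f))

/-- The number of non-crossing perfect matchings of `S`. -/
noncomputable def pm (S : Finset Pt) : ℕ :=
  Set.ncard {M : Finset (Sym2 Pt) | IsNCMatching S M}

/-- `S` is in convex position: no point of `S` lies in the convex hull of the
other points. -/
def ConvexPosition (S : Finset Pt) : Prop :=
  ∀ p ∈ S, p ∉ convexHull ℝ (↑(S.erase p) : Set Pt)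

/-- The signed side of `X` with respect to the directed line from `Q` to `P`.
The two open half-planes bounded by the line through `Q` and `P` are
`{X | 0 < sideOf Q P X}` and `{X | sideOf Q P X < 0}`. -/
def sideOf (Q P X : Pt) : ℝ :=
  (P.1 - Q.1) * (X.2 - Q.2) - (P.2 - Q.2) * (X.1 - Q.1)

/-- Segment `AB` pierces segment `CD`: the closed segments are disjoint, but the
affine line through `A` and `B` meets the closed segment `CD`. -/
def Pierces (A B C D : Pt) : Prop :=
  Disjoint (segment ℝ A B) (segment ℝ C D) ∧
  ((affineSpan ℝ ({A, B} : Set Pt) : Set Pt) ∩ segment ℝ C D).Nonempty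

/-- The matching `M` of `S` has the *piercing property*: it contains pairs
`{A,B}` and `{C,D}` with `A` on the boundary of the convex hull of `S`
and `AB` piercing `CD`. -/
def HasPiercing (S : Finset Pt) (M : Finset (Sym2 Pt)) : Prop :=
  ∃ A B C D : Pt, s(A, B) ∈ M ∧ s(C, D) ∈ M ∧
    A ∈ frontier (convexHull ℝ (S : Set Pt)) ∧ Pierces A B C D

/-- The exceptional order type with interior point `Q`: `Q` is the unique point
of `S` interior to the convex hull of `S`, and for every other point `P` of `S`
each open half-plane bounded by the line through `Q` and `P` contains exactly
two points of `S`. -/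
def ExceptionalAt (S : Finset Pt) (Q : Pt) : Prop :=
  (↑S ∩ interior (convexHull ℝ (S : Set Pt))) = {Q} ∧
  ∀ P ∈ S, P ≠ Q →
    (S.filter (fun X => 0 < sideOf Q P X)).card = 2 ∧
    (S.filter (fun X => sideOf Q P X < 0)).card = 2

/-- The exceptional order type of Figure 1. -/
def Exceptional (S : Finset Pt) : Prop :=
  ∃ Q ∈ S, ExceptionalAt S Q

/-!
Rotate a line about `Q`. The number of points on its left minus the number on its right changes by
`2` each time the line passes over a point and is negated after half a turn; it is odd as long as
the line avoids the `2k - 1` points of `S \ {Q}`. Hence it takes the value `1` or `-1` somewhere.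
If it also takes a value of absolute value at least `3`, then some passage over a point `P₀` changes
the absolute value from `1` to `3` or back, and the line `QP₀` itself has imbalance `±2`. Replacing
each point behind a fixed reference line through `Q` by its reflection in `Q`, with weight `-1`,
turns the rotation into a sweep through a linearly ordered set of weights `±1`.
-/

section Sweep

theorem exists_not_iff_succ {p : ℕ → Prop} {i j : ℕ} (hi : p i) (hj : ¬ p j) :
    ∃ k, ¬ (p k ↔ p (k + 1)) := by
  by_contra! hconst
  have iff_zero (k : ℕ) : p k ↔ p 0 := by
    induction k with
    | zero => rfl
    | succ k ih => exact (hconst k).symm.trans ih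
  exact hj ((iff_zero j).2 ((iff_zero i).1 hi))

variable {α : Type*} {A : Finset α} {w : α → ℤ} {r : α → ℕ} {a : α}

/-- The signed total of the weights `w` over `A` after a sweep, in the order given by the ranks `r`,
has negated the weights of all elements of rank less than `i`. -/
def cutSum (A : Finset α) (w : α → ℤ) (r : α → ℕ) (i : ℕ) : ℤ :=
  ∑ a ∈ A, if r a < i then -w a else w a

theorem cutSum_zero : cutSum A w r 0 = ∑ a ∈ A, w a := by
  simp [cutSum]

theorem exists_cutSum_eq_neg_sum : ∃ i, cutSum A w r i = -∑ a ∈ A, w a := by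
  refine ⟨A.sup r + 1, ?_⟩
  rw [cutSum, ← Finset.sum_neg_distrib]
  exact Finset.sum_congr rfl fun a ha => if_pos (Nat.lt_succ_of_le (Finset.le_sup ha))

theorem cutSum_succ_of_forall_ne {i : ℕ} (h : ∀ a ∈ A, r a ≠ i) :
    cutSum A w r (i + 1) = cutSum A w r i := by
  refine Finset.sum_congr rfl fun a ha => ?_
  have := h a ha
  exact if_congr (by omega) rfl rfl

theorem cutSum_rank_succ (hr : Set.InjOn r A) (ha : a ∈ A) :
    cutSum A w r (r a + 1) = cutSum A w r (r a) - 2 * w a := by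
  have single : ∑ b ∈ A, (if b = a then 2 * w b else 0) = 2 * w a := by simp [ha]
  rw [← single, cutSum, cutSum, ← Finset.sum_sub_distrib]
  refine Finset.sum_congr rfl fun b hb => ?_
  have rank_eq_iff : r b = r a ↔ b = a := hr.eq_iff hb ha
  grind

theorem exists_mem_not_iff_of_cutSum (hr : Set.InjOn r A) {p : ℤ → Prop} {i j : ℕ}
    (hi : p (cutSum A w r i)) (hj : ¬ p (cutSum A w r j)) :
    ∃ a ∈ A, ¬ (p (cutSum A w r (r a)) ↔ p (cutSum A w r (r a) - 2 * w a)) := by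
  obtain ⟨k, hk⟩ := exists_not_iff_succ (p := fun i => p (cutSum A w r i)) hi hj
  obtain ⟨a, ha, rfl⟩ : ∃ a ∈ A, r a = k := by
    by_contra! h
    exact hk (by rw [cutSum_succ_of_forall_ne h])
  exact ⟨a, ha, cutSum_rank_succ hr ha ▸ hk⟩

theorem odd_cutSum (hw : ∀ a ∈ A, Odd (w a)) (hA : Odd A.card) (i : ℕ) :
    Odd (cutSum A w r i) := by
  have even_sub_card : Even (cutSum A w r i - A.card) := by
    rw [cutSum, Finset.cast_card, ← Finset.sum_sub_distrib]
    refine Finset.even_sum _ fun a ha => Odd.sub_odd ?_ odd_one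
    split_ifs
    exacts [(hw a ha).neg, hw a ha]
  simpa using even_sub_card.add_odd ((Int.odd_coe_nat _).2 hA)

theorem exists_abs_cutSum_eq_one (hr : Set.InjOn r A) (hw : ∀ a ∈ A, w a = 1 ∨ w a = -1)
    (hA : Odd A.card) : ∃ i, |cutSum A w r i| = 1 := by
  have hodd (i : ℕ) : Odd (cutSum A w r i) := odd_cutSum (by grind) hA i
  obtain ⟨n, hn⟩ := exists_cutSum_eq_neg_sum (A := A) (w := w) (r := r)
  obtain ⟨i, j, hi, hj⟩ : ∃ i j, 0 < cutSum A w r i ∧ ¬ 0 < cutSum A w r j := by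
    have h0 := cutSum_zero (A := A) (w := w) (r := r)
    have := hodd 0
    rcases lt_or_ge 0 (cutSum A w r 0) with h | h
    · exact ⟨0, n, h, by omega⟩
    · exact ⟨n, 0, by grind, by omega⟩
  obtain ⟨a, ha, hcross⟩ := exists_mem_not_iff_of_cutSum hr (p := fun x => 0 < x) hi hj
  refine ⟨r a, ?_⟩
  have := hodd (r a)
  have := hw a ha
  grind

-- `cutSum A w r (r a) - w a` is the mean of the cut sums just before and just after passing `a`.
theorem exists_abs_cutSum_sub_eq_two (hr : Set.InjOn r A) (hw : ∀ a ∈ A, w a = 1 ∨ w a = -1)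
    (hA : Odd A.card) (hne : ∃ a ∈ A, cutSum A w r (r a) - w a ≠ 0) :
    ∃ a ∈ A, |cutSum A w r (r a) - w a| = 2 := by
  have hodd (i : ℕ) : Odd (cutSum A w r i) := odd_cutSum (by grind) hA i
  obtain ⟨i, hi⟩ := exists_abs_cutSum_eq_one hr hw hA
  obtain ⟨j, hj⟩ : ∃ j, |cutSum A w r j| ≠ 1 := by
    obtain ⟨b, hb, hne⟩ := hne
    by_contra! hone
    have := hone (r b)
    have := hone (r b + 1)
    have := cutSum_rank_succ (w := w) hr hb
    have := hw b hb
    grind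
  obtain ⟨a, ha, hcross⟩ := exists_mem_not_iff_of_cutSum hr (p := fun x => |x| = 1) hi hj
  refine ⟨a, ha, ?_⟩
  have := hodd (r a)
  have := hw a ha
  grind

end Sweep

section Rank

variable {α β : Type*} [LinearOrder β] {A : Finset α} {key : α → β} {a b : α}

/-- The rank of `a` when `A` is ordered by `key`, counted from `0`. -/
noncomputable def rankOn (A : Finset α) (key : α → β) (a : α) : ℕ :=
  (A.filter fun b => key b < key a).card

theorem rankOn_lt_rankOn_iff (ha : a ∈ A) : rankOn A key a < rankOn A key b ↔ key a < key b := by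
  constructor
  · contrapose!
    exact fun h => Finset.card_le_card (Finset.monotone_filter_right A fun _ _ hc => hc.trans_le h)
  · refine fun h => Finset.card_lt_card (Finset.ssubset_iff_of_subset ?_ |>.2 ⟨a, ?_, ?_⟩)
    · exact Finset.monotone_filter_right A fun _ _ hc => hc.trans h
    · exact Finset.mem_filter.2 ⟨ha, h⟩
    · simp

theorem rankOn_injOn (hkey : Set.InjOn key A) : Set.InjOn (rankOn A key) A := by
  intro a ha b hb hab
  refine hkey ha hb (le_antisymm ?_ ?_)
  · exact not_lt.1 fun h => ((rankOn_lt_rankOn_iff hb).2 h).ne' hab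
  · exact not_lt.1 fun h => ((rankOn_lt_rankOn_iff ha).2 h).ne hab

theorem sum_mul_sign_sub_eq_cutSum_sub [AddCommGroup β] [IsOrderedAddMonoid β]
    (hkey : Set.InjOn key A) (w : α → ℤ) (ha : a ∈ A) :
    ∑ b ∈ A, w b * (SignType.sign (key b - key a) : ℤ) =
      cutSum A w (rankOn A key) (rankOn A key a) - w a := by
  have single : ∑ b ∈ A, (if b = a then w b else 0) = w a := by simp [ha]
  rw [← single, cutSum, ← Finset.sum_sub_distrib]
  refine Finset.sum_congr rfl fun b hb => ?_
  simp only [rankOn_lt_rankOn_iff hb]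
  rcases lt_trichotomy (key b) (key a) with h | h | h
  · have hba : b ≠ a := fun hba => h.ne (congrArg key hba)
    simp [h, hba]
  · simp [hkey hb ha h]
  · have hba : b ≠ a := fun hba => h.ne' (congrArg key hba)
    simp [h, h.not_gt, hba]

end Rank

section Sign

variable {α β : Type*} [Zero β] [LinearOrder β]

theorem intCast_sign_eq_one_or_neg_one {x : β} (hx : x ≠ 0) :
    (SignType.sign x : ℤ) = 1 ∨ (SignType.sign x : ℤ) = -1 := by
  rcases hx.lt_or_gt with h | h <;> simp [h]

theorem sum_sign_eq_card_sub_card (S : Finset α) (f : α → β) :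
    ∑ x ∈ S, (SignType.sign (f x) : ℤ) =
      (S.filter fun x => 0 < f x).card - (S.filter fun x => f x < 0).card := by
  rw [Finset.card_filter, Finset.card_filter]
  push_cast
  rw [← Finset.sum_sub_distrib]
  refine Finset.sum_congr rfl fun x _ => ?_
  rcases lt_trichotomy (f x) 0 with h | h | h <;> simp [h, h.not_gt]

theorem card_pos_add_card_neg_add_card_zero (S : Finset α) (f : α → β) :
    (S.filter fun x => 0 < f x).card + (S.filter fun x => f x < 0).card +
      (S.filter fun x => f x = 0).card = S.card := by
  rw [Finset.card_filter, Finset.card_filter, Finset.card_filter, Finset.card_eq_sum_ones,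
    ← Finset.sum_add_distrib, ← Finset.sum_add_distrib]
  refine Finset.sum_congr rfl fun x _ => ?_
  rcases lt_trichotomy (f x) 0 with h | h | h <;> simp [h, h.not_gt, ne_of_lt, ne_of_gt]

end Sign

section Pencil

variable {S : Finset Pt} {Q P X : Pt} {m : ℝ}

theorem collinear_of_sideOf_eq_zero (hPQ : P ≠ Q) (h : sideOf Q P X = 0) :
    Collinear ℝ ({Q, P, X} : Set Pt) := by
  have hnorm : (P.1 - Q.1) ^ 2 + (P.2 - Q.2) ^ 2 ≠ 0 := by
    contrapose! hPQ
    exact Prod.ext (by nlinarith) (by nlinarith)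
  -- The scalar is the coefficient of the orthogonal projection of `X - Q` onto `P - Q`.
  have hX : X = AffineMap.lineMap Q P (((X.1 - Q.1) * (P.1 - Q.1) + (X.2 - Q.2) * (P.2 - Q.2)) /
      ((P.1 - Q.1) ^ 2 + (P.2 - Q.2) ^ 2)) := by
    rw [sideOf] at h
    ext <;> simp only [AffineMap.lineMap_apply, vsub_eq_sub, vadd_eq_add, Prod.fst_add,
      Prod.snd_add, Prod.smul_fst, Prod.smul_snd, Prod.fst_sub, Prod.snd_sub, smul_eq_mul] <;>
      field_simp
    · linear_combination (-(P.2 - Q.2)) * h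
    · linear_combination (P.1 - Q.1) * h
  rw [Set.pair_comm P X, Set.insert_comm Q X]
  refine collinear_insert_of_mem_affineSpan_pair ?_
  rw [hX]
  exact AffineMap.lineMap_mem_affineSpan_pair _ Q P

/-- No line through `Q` contains two points of `S` other than `Q`: the part of general position
of `S` that concerns lines through `Q`. -/
def GeneralPositionAt (S : Finset Pt) (Q : Pt) : Prop :=
  ∀ P ∈ S, ∀ X ∈ S, Q ≠ P → Q ≠ X → P ≠ X → ¬ Collinear ℝ ({Q, P, X} : Set Pt)

theorem GeneralPosition.generalPositionAt (hS : GeneralPosition S) (hQ : Q ∈ S) :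
    GeneralPositionAt S Q :=
  hS Q hQ

theorem GeneralPositionAt.sideOf_eq_zero_iff (hS : GeneralPositionAt S Q) (hP : P ∈ S)
    (hPQ : P ≠ Q) (hX : X ∈ S) : sideOf Q P X = 0 ↔ X = Q ∨ X = P := by
  constructor
  · intro h
    by_contra! hne
    exact hS P hP X hX hPQ.symm hne.1.symm hne.2.symm (collinear_of_sideOf_eq_zero hPQ h)
  · rintro (rfl | rfl) <;> simp [sideOf, mul_comm]

theorem GeneralPositionAt.card_pos_add_card_neg (hS : GeneralPositionAt S Q) (hQ : Q ∈ S)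
    (hP : P ∈ S) (hPQ : P ≠ Q) :
    (S.filter fun X => 0 < sideOf Q P X).card + (S.filter fun X => sideOf Q P X < 0).card + 2 =
      S.card := by
  have zero_side : S.filter (fun X => sideOf Q P X = 0) = {Q, P} := by
    ext X
    grind [hS.sideOf_eq_zero_iff hP hPQ (X := X)]
  rw [← card_pos_add_card_neg_add_card_zero S (sideOf Q P), zero_side,
    Finset.card_pair hPQ.symm]

/-- The signed vertical distance from `P` to the reference line of slope `m` through `Q`. -/
def height (m : ℝ) (Q P : Pt) : ℝ :=
  (P.2 - Q.2) - m * (P.1 - Q.1)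

/-- A coordinate on the pencil of lines through `Q`, increasing counterclockwise from the reference
line of slope `m`: it depends only on the line `QP`. It is the junk value `0` on the reference
line itself. -/
noncomputable def pencilCoord (m : ℝ) (Q P : Pt) : ℝ :=
  (Q.1 - P.1) / height m Q P

/-- The weight of `P` in the sweep: `1` above and `-1` below the reference line of slope `m` through
`Q`, and `0` on it. -/
noncomputable def heightSign (m : ℝ) (Q P : Pt) : ℤ :=
  SignType.sign (height m Q P)

/-- The position of the line `QP` among the lines from `Q` to the other points of `S`, in
counterclockwise order from the reference line of slope `m`. -/
noncomputable def pencilRank (S : Finset Pt) (m : ℝ) (Q : Pt) : Pt → ℕ :=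
  rankOn (S.erase Q) (pencilCoord m Q)

theorem exists_forall_height_ne_zero (S : Finset Pt) (Q : Pt) :
    ∃ m, ∀ P ∈ S, P ≠ Q → height m Q P ≠ 0 := by
  obtain ⟨m, hm⟩ := Infinite.exists_notMem_finset (S.image fun P => (P.2 - Q.2) / (P.1 - Q.1))
  refine ⟨m, fun P hP hPQ hheight => ?_⟩
  rw [height, sub_eq_zero] at hheight
  by_cases hvertical : P.1 - Q.1 = 0
  · rw [hvertical, mul_zero] at hheight
    exact hPQ (Prod.ext (sub_eq_zero.1 hvertical) (sub_eq_zero.1 hheight))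
  · exact hm (Finset.mem_image.2 ⟨P, hP, (div_eq_iff hvertical).2 hheight⟩)

theorem sideOf_eq_height_mul_height_mul_sub (hP : height m Q P ≠ 0) (hX : height m Q X ≠ 0) :
    sideOf Q P X =
      height m Q P * (height m Q X * (pencilCoord m Q X - pencilCoord m Q P)) := by
  have hPcoord : height m Q P * pencilCoord m Q P = Q.1 - P.1 := mul_div_cancel₀ _ hP
  have hXcoord : height m Q X * pencilCoord m Q X = Q.1 - X.1 := mul_div_cancel₀ _ hX
  calc sideOf Q P X = height m Q P * (Q.1 - X.1) - height m Q X * (Q.1 - P.1) := by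
        rw [sideOf, height, height]; ring
    _ = _ := by rw [← hPcoord, ← hXcoord]; ring

theorem GeneralPositionAt.pencilCoord_injOn (hS : GeneralPositionAt S Q)
    (hm : ∀ P ∈ S, P ≠ Q → height m Q P ≠ 0) :
    Set.InjOn (pencilCoord m Q) (S.erase Q) := by
  intro P hP X hX hcoord
  obtain ⟨hPQ, hP⟩ := Finset.mem_erase.1 hP
  obtain ⟨hXQ, hX⟩ := Finset.mem_erase.1 hX
  have hside : sideOf Q P X = 0 := by
    rw [sideOf_eq_height_mul_height_mul_sub (hm P hP hPQ) (hm X hX hXQ), hcoord]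
    ring
  exact (((hS.sideOf_eq_zero_iff hP hPQ hX).1 hside).resolve_left hXQ).symm

theorem sum_sign_sideOf (hm : ∀ P ∈ S, P ≠ Q → height m Q P ≠ 0) (hP : P ∈ S) (hPQ : P ≠ Q) :
    ∑ X ∈ S, (SignType.sign (sideOf Q P X) : ℤ) =
      heightSign m Q P * ∑ X ∈ S.erase Q, heightSign m Q X *
        (SignType.sign (pencilCoord m Q X - pencilCoord m Q P) : ℤ) := by
  have hQside : (SignType.sign (sideOf Q P Q) : ℤ) = 0 := by simp [sideOf]
  rw [← Finset.sum_erase S hQside, Finset.mul_sum]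
  refine Finset.sum_congr rfl fun X hX => ?_
  obtain ⟨hXQ, hX⟩ := Finset.mem_erase.1 hX
  rw [sideOf_eq_height_mul_height_mul_sub (hm P hP hPQ) (hm X hX hXQ), sign_mul, sign_mul,
    SignType.coe_mul, SignType.coe_mul, heightSign, heightSign]

/-- The number of points of `S` to the left of the directed line from `Q` to `P` minus the number
of points to its right. -/
noncomputable def lineImbalance (S : Finset Pt) (Q P : Pt) : ℤ :=
  (S.filter fun X => 0 < sideOf Q P X).card - (S.filter fun X => sideOf Q P X < 0).card

theorem GeneralPositionAt.lineImbalance_eq_mul_cutSum_sub (hS : GeneralPositionAt S Q)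
    (hm : ∀ P ∈ S, P ≠ Q → height m Q P ≠ 0) (hP : P ∈ S) (hPQ : P ≠ Q) :
    lineImbalance S Q P =
      heightSign m Q P * (cutSum (S.erase Q) (heightSign m Q) (pencilRank S m Q)
        (pencilRank S m Q P) - heightSign m Q P) := by
  rw [lineImbalance, ← sum_sign_eq_card_sub_card, sum_sign_sideOf hm hP hPQ]
  congr 1
  exact sum_mul_sign_sub_eq_cutSum_sub (hS.pencilCoord_injOn hm) (heightSign m Q)
    (Finset.mem_erase.2 ⟨hPQ, hP⟩)

theorem GeneralPositionAt.exists_abs_lineImbalance_eq_two (hS : GeneralPositionAt S Q)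
    (hQ : Q ∈ S) (hcard : Even S.card) (hne : ∃ P ∈ S, P ≠ Q ∧ lineImbalance S Q P ≠ 0) :
    ∃ P ∈ S, P ≠ Q ∧ |lineImbalance S Q P| = 2 := by
  obtain ⟨m, hm⟩ := exists_forall_height_ne_zero S Q
  have hw : ∀ X ∈ S.erase Q, heightSign m Q X = 1 ∨ heightSign m Q X = -1 := fun X hX =>
    intCast_sign_eq_one_or_neg_one (hm X (Finset.mem_of_mem_erase hX) (Finset.ne_of_mem_erase hX))
  have hrank : Set.InjOn (pencilRank S m Q) (S.erase Q) := rankOn_injOn (hS.pencilCoord_injOn hm)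
  have hodd : Odd (S.erase Q).card := by
    rw [Finset.card_erase_of_mem hQ]
    exact Nat.Even.sub_odd (Finset.card_pos.2 ⟨Q, hQ⟩) hcard odd_one
  obtain ⟨P, hP, hPQ, hPne⟩ := hne
  rw [hS.lineImbalance_eq_mul_cutSum_sub hm hP hPQ] at hPne
  obtain ⟨P₀, hP₀, htwo⟩ := exists_abs_cutSum_sub_eq_two hrank hw hodd
    ⟨P, Finset.mem_erase.2 ⟨hPQ, hP⟩, right_ne_zero_of_mul hPne⟩
  obtain ⟨hP₀Q, hP₀S⟩ := Finset.mem_erase.1 hP₀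
  refine ⟨P₀, hP₀S, hP₀Q, ?_⟩
  rw [hS.lineImbalance_eq_mul_cutSum_sub hm hP₀S hP₀Q, abs_mul, htwo]
  rcases hw P₀ hP₀ with h | h <;> simp [h]

end Pencil

theorem exists_k_sub_two_k_line_general (k : ℕ) (S : Finset Pt)
    (hcard : S.card = 2 * k) (Q : Pt) (hQ : Q ∈ S)
    (hgp : GeneralPositionAt S Q)
    (hnothalving : ∃ P ∈ S, P ≠ Q ∧
      (S.filter (fun X => 0 < sideOf Q P X)).card ≠
        (S.filter (fun X => sideOf Q P X < 0)).card) :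
    ∃ P₀ ∈ S, P₀ ≠ Q ∧
      (((S.filter (fun X => 0 < sideOf Q P₀ X)).card = k - 2 ∧
        (S.filter (fun X => sideOf Q P₀ X < 0)).card = k) ∨
       ((S.filter (fun X => 0 < sideOf Q P₀ X)).card = k ∧
        (S.filter (fun X => sideOf Q P₀ X < 0)).card = k - 2)) := by
  obtain ⟨P, hP, hPQ, hne⟩ := hnothalving
  obtain ⟨P₀, hP₀, hP₀Q, habs⟩ := hgp.exists_abs_lineImbalance_eq_two hQ
    ⟨k, hcard.trans (two_mul k)⟩ ⟨P, hP, hPQ, sub_ne_zero.2 (Nat.cast_injective.ne hne)⟩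
  have hsum := hgp.card_pos_add_card_neg hQ hP₀ hP₀Q
  rw [lineImbalance, abs_eq zero_le_two] at habs
  exact ⟨P₀, hP₀, hP₀Q, by omega⟩

/-- If `S` has `2k` points in general position with exactly one
point `Q` interior to the convex hull, and not every line through `Q` and
another point of `S` halves `S`, then some line through `Q` and a point
`P₀ ∈ S` leaves exactly `k - 2` points of `S` on one side and `k` on the
other. -/
theorem exists_k_sub_two_k_line (k : ℕ) (S : Finset Pt)
    (hcard : S.card = 2 * k) (hgp : GeneralPosition S) (Q : Pt) (hQ : Q ∈ S)
    (hint : (↑S ∩ interior (convexHull ℝ (S : Set Pt))) = {Q})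
    (hnothalving : ∃ P ∈ S, P ≠ Q ∧
      (S.filter (fun X => 0 < sideOf Q P X)).card ≠
        (S.filter (fun X => sideOf Q P X < 0)).card) :
    ∃ P₀ ∈ S, P₀ ≠ Q ∧
      (((S.filter (fun X => 0 < sideOf Q P₀ X)).card = k - 2 ∧
        (S.filter (fun X => sideOf Q P₀ X < 0)).card = k) ∨
       ((S.filter (fun X => 0 < sideOf Q P₀ X)).card = k ∧
        (S.filter (fun X => sideOf Q P₀ X < 0)).card = k - 2)) := by
  exact exists_k_sub_two_k_line_general k S hcard Q hQ (hgp.generalPositionAt hQ) hnothalving
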